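/- Let H be a non-empty graph and let t be an integer with t ≥ max(|V(H)|, 3) such that rwsat(n, H) ≤ t·n for every positive integer n. Then for all integers m_1, m_2 ≥ t^{10}, one has rwsat(m_1 + m_2, H) ≤ rwsat(m_1, H) + rwsat(m_2, H) + t^{14}. -/

import Mathlib

open SimpleGraph

/-- The edge-colored graph `(G, c)` contains a rainbow copy of `H`
passing through the edge `e`. -/
def IsRainbowCopyThrough {W V : Type*} (H : SimpleGraph W) (G : SimpleGraph V)
    (c : Sym2 V → ℕ) (e : Sym2 V) : Prop :=
  ∃ f : W → V, Function.Injective f ∧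
    (∀ ⦃a b⦄, H.Adj a b → G.Adj (f a) (f b)) ∧
    (∀ ⦃a b a' b'⦄, H.Adj a b → H.Adj a' b' →
      c s(f a, f b) = c s(f a', f b') → s(a, b) = s(a', b')) ∧
    ∃ a b, H.Adj a b ∧ e = s(f a, f b)

/-- The edge-colored graph `(G, c)` is weakly `H`-rainbow saturated: there is an
ordering `L` of the non-edges of `G` such that for every list `cs` of pairwise
distinct colors, adding the non-edges one at a time (the `i`-th one in color `cs i`)
always creates a new rainbow copy of `H` through the added edge. -/
def WeaklyRainbowSat {W V : Type*} [DecidableEq V] (H : SimpleGraph W)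
    (G : SimpleGraph V) (c : Sym2 V → ℕ) : Prop :=
  ∃ L : List (Sym2 V), L.Nodup ∧ (∀ e, e ∈ L ↔ e ∈ Gᶜ.edgeSet) ∧
    ∀ cs : List ℕ, cs.length = L.length → cs.Nodup →
      ∀ i : Fin L.length,
        IsRainbowCopyThrough H
          (G ⊔ SimpleGraph.fromEdgeSet {e | e ∈ L.take ((i : ℕ) + 1)})
          (((L.zip cs).take ((i : ℕ) + 1)).foldl
            (fun c' p => Function.update c' p.1 p.2) c)
          (L.get i)

/-- The weak rainbow saturation number `rwsat(n, H)`: the minimum number of edges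
in a weakly `H`-rainbow saturated edge-colored graph on `n` vertices, where by
convention the value is `n.choose 2` if no such graph exists. -/
noncomputable def rwsat {W : Type*} (H : SimpleGraph W) (n : ℕ) : ℕ :=
  sInf ({m | ∃ (G : SimpleGraph (Fin n)) (c : Sym2 (Fin n) → ℕ),
    WeaklyRainbowSat H G c ∧ G.edgeSet.ncard = m} ∪ {n.choose 2})

/-- `δ'(H)`: the minimum degree among vertices of nonzero degree. -/
noncomputable def minPosDeg {W : Type*} (H : SimpleGraph W) : ℕ :=
  sInf {d | ∃ v, (H.neighborSet v).ncard = d ∧ d ≠ 0}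

/-- `A` is contained in `B` as a subgraph (there is an injective graph
homomorphism from `A` to `B`). -/
def ContainsCopy {α β : Type*} (A : SimpleGraph α) (B : SimpleGraph β) : Prop :=
  ∃ f : α → β, Function.Injective f ∧ ∀ ⦃a b⦄, A.Adj a b → B.Adj (f a) (f b)

/-- The Turán number `ex(N, ℋ)` of the family `ℋ = {H - {u, v} : uv ∈ E(H)}`:
the maximum number of edges of an `N`-vertex graph containing no member of `ℋ`. -/
noncomputable def exFam {W : Type*} (H : SimpleGraph W) (N : ℕ) : ℕ :=
  sSup {m | ∃ G : SimpleGraph (Fin N),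
    (∀ u v : W, H.Adj u v → ¬ ContainsCopy (H.induce ({u, v}ᶜ : Set W)) G) ∧
    G.edgeSet.ncard = m}

/-- `f(H)`: the smallest `n` such that for each `N ∈ {n-1, n}` one has
`ex(N, ℋ) ≤ C(N,2) - 2N - 2`. -/
noncomputable def fH {W : Type*} (H : SimpleGraph W) : ℕ :=
  sInf {n | ∀ N ∈ ({n - 1, n} : Set ℕ),
    (exFam H N : ℤ) ≤ (N.choose 2 : ℤ) - 2 * N - 2}

/-- The coloring `c` is rainbow (injective) on the set `S` of edges. -/
def RainbowOn {V : Type*} (c : Sym2 V → ℕ) (S : Set (Sym2 V)) : Prop :=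
  ∀ e₁ ∈ S, ∀ e₂ ∈ S, c e₁ = c e₂ → e₁ = e₂

/-!
An edge-colored graph `(G, c)` is weakly `H`-rainbow saturated iff no proper graph `K ⊇ G` is closed
under forcing, where `K` forces a pair if adding it creates a rainbow copy of `H` through it for
every choice of distinct colors on the edges outside `G`. In this form saturation does not mention
orderings and is inherited by induced subgraphs: once optimal graphs `G₁` and `G₂` sit side by side,
a closed `K` contains all pairs inside each of them, and it remains to force the pairs across.

Fresh edges have distinct colors, so two cliques of fresh edges sharing all but one vertex each
force the missing pair. To get started, join a vertex `u` to an independent set of anchors, using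
each of the colors `0, …, t - 1` more than `2 * t` times. At most `2 * t` vertices meet a fresh
edge of color less than `t`; avoiding these leaves a rainbow star from `u` to the anchors, and this
star together with fresh edges is a rainbow clique.

As `Gᵢ` has at most `t * mᵢ` edges, it has at most `2 * t ^ 5` hubs, vertices of degree more than
`mᵢ / t ^ 4`, and the remaining degrees are small enough to select the anchors greedily. Joining the
hubs and anchors of `G₁` to those of `G₂` takes at most `t ^ 7 * t ^ 7` edges. These force, in turn,
the pairs with a free vertex, that is, neither a hub nor adjacent to or equal to an anchor, and then
all others, since every non-hub extends a large independent set of free vertices.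
-/

section Extension

variable {α β : Type*}

theorem exists_injective_extension_of_card_le [Fintype α] {s : Set α} {f : α → β} {t : Finset β}
    (hf : s.InjOn f) (hst : s.MapsTo f t) (ht : Fintype.card α ≤ t.card) :
    ∃ g : α → β, g.Injective ∧ (∀ a, g a ∈ t) ∧ s.EqOn g f := by
  classical
  have himage : (s.toFinset.image f).card ≤ Fintype.card α :=
    Finset.card_image_le.trans (Finset.card_le_univ _)
  obtain ⟨u, hu, hut, hcard⟩ := Finset.exists_subsuperset_card_eq
    (Finset.image_subset_iff.2 fun a ha => hst (Set.mem_toFinset.1 ha)) himage ht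
  have hsu : s.MapsTo f u := fun a ha =>
    hu (Finset.mem_image_of_mem f (Set.mem_toFinset.2 ha))
  obtain ⟨g, hg⟩ := hsu.exists_equiv_extend_of_card_eq hcard.symm hf
  exact ⟨fun a => g a, Subtype.val_injective.comp g.injective, fun a => hut (g a).2, hg⟩

theorem exists_injective_extension [Finite α] [Infinite β] {s : Set α} {f : α → β}
    (hf : s.InjOn f) : ∃ g : α → β, g.Injective ∧ s.EqOn g f := by
  classical
  have := Fintype.ofFinite α
  obtain ⟨t, hst, ht⟩ := Infinite.exists_superset_card_eq (s.toFinset.image f) (Fintype.card α)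
    (Finset.card_image_le.trans (Finset.card_le_univ _))
  obtain ⟨g, hg, -, hgf⟩ := exists_injective_extension_of_card_le hf
    (fun a ha => hst (Finset.mem_image_of_mem f (Set.mem_toFinset.2 ha))) ht.ge
  exact ⟨g, hg, hgf⟩

theorem exists_maximal_list_of_rule [Finite α] (P : Set α → α → Prop) :
    ∃ L : List α, L.Nodup ∧ (∀ i : Fin L.length, P {a | a ∈ L.take i} (L.get i)) ∧
      ∀ a, P {b | b ∈ L} a → a ∈ L := by
  have := Fintype.ofFinite α
  by_contra! hmax
  have hlong (n : ℕ) : ∃ L : List α, L.length = n ∧ L.Nodup ∧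
      ∀ i : Fin L.length, P {a | a ∈ L.take i} (L.get i) := by
    induction n with
    | zero => exact ⟨[], rfl, List.nodup_nil, fun i => i.elim0⟩
    | succ n ih =>
      obtain ⟨L, rfl, hnodup, hL⟩ := ih
      obtain ⟨a, ha, haL⟩ := hmax L hnodup hL
      refine ⟨L ++ [a], by simp, by simpa using hnodup.concat haL, fun ⟨i, hi⟩ => ?_⟩
      rcases (Nat.lt_succ_iff.1 (by simpa using hi)).lt_or_eq with hlt | rfl
      · simpa [List.take_append_of_le_length hlt.le, List.getElem_append_left hlt]
          using hL ⟨i, hlt⟩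
      · simpa using ha
  obtain ⟨L, hlen, hnodup, -⟩ := hlong (Fintype.card α + 1)
  have := hnodup.length_le_card
  omega

end Extension

section Recoloring

variable {α β : Type*} [DecidableEq α]

/-- The map obtained from `c` by performing the updates in `l` from left to right; this is the
coloring reached after the edges in `l` have been added. -/
def recolor (c : α → β) (l : List (α × β)) : α → β :=
  l.foldl (fun c' p => Function.update c' p.1 p.2) c

theorem recolor_of_notMem {c : α → β} {l : List (α × β)} {a : α} (ha : a ∉ l.map Prod.fst) :
    recolor c l a = c a := by
  induction l generalizing c with
  | nil => rfl
  | cons p l ih =>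
    simp only [List.map_cons, List.mem_cons, not_or] at ha
    exact (ih ha.2).trans (Function.update_of_ne ha.1 _ _)

theorem recolor_of_mem {c : α → β} {l : List (α × β)} {p : α × β}
    (hl : (l.map Prod.fst).Nodup) (hp : p ∈ l) : recolor c l p.1 = p.2 := by
  induction l generalizing c with
  | nil => simp at hp
  | cons q l ih =>
    simp only [List.map_cons, List.nodup_cons] at hl
    rcases List.mem_cons.1 hp with rfl | hp
    · exact (recolor_of_notMem hl.1).trans (Function.update_self _ _ _)
    · exact ih hl.2 hp

theorem injOn_recolor {c : α → β} {l : List (α × β)} (hfst : (l.map Prod.fst).Nodup)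
    (hsnd : (l.map Prod.snd).Nodup) : Set.InjOn (recolor c l) {a | a ∈ l.map Prod.fst} := by
  intro a ha b hb hab
  obtain ⟨p, hp, rfl⟩ := List.mem_map.1 ha
  obtain ⟨q, hq, rfl⟩ := List.mem_map.1 hb
  rw [recolor_of_mem hfst hp, recolor_of_mem hfst hq] at hab
  rw [List.inj_on_of_nodup_map hsnd hp hq hab]

end Recoloring

section Forcing

variable {W V V' : Type*} {H : SimpleGraph W} {G K K' : SimpleGraph V} {c κ κ' : Sym2 V → ℕ}
  {e : Sym2 V}

/-- `κ` restricts to the coloring `c` of `G` and gives pairwise distinct colors to the edges of `K`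
outside `G`. As in the saturation process, these colors may also occur in `G`. -/
def IsFreshColoring (G : SimpleGraph V) (c : Sym2 V → ℕ) (K : SimpleGraph V)
    (κ : Sym2 V → ℕ) : Prop :=
  Set.EqOn κ c G.edgeSet ∧ Set.InjOn κ (K \ G).edgeSet

/-- One step of the saturation process: whatever fresh colors the edges outside `G` carry, adding
`e` to `K` creates a rainbow copy of `H` through `e`. -/
def IsForced (H : SimpleGraph W) (G : SimpleGraph V) (c : Sym2 V → ℕ) (K : SimpleGraph V)
    (e : Sym2 V) : Prop :=
  ∀ κ, IsFreshColoring G c (K ⊔ fromEdgeSet {e}) κ →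
    IsRainbowCopyThrough H (K ⊔ fromEdgeSet {e}) κ e

/-- The saturation process started at `(G, c)` cannot leave `K`. -/
structure IsForcingClosed (H : SimpleGraph W) (G : SimpleGraph V) (c : Sym2 V → ℕ)
    (K : SimpleGraph V) : Prop where
  le : G ≤ K
  mem_of_isForced : ∀ ⦃e⦄, ¬ e.IsDiag → IsForced H G c K e → e ∈ K.edgeSet

theorem IsFreshColoring.anti (h : IsFreshColoring G c K' κ) (hK : K ≤ K') :
    IsFreshColoring G c K κ :=
  ⟨h.1, h.2.mono (edgeSet_subset_edgeSet.2 (sdiff_le_sdiff_right hK))⟩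

theorem IsRainbowCopyThrough.mono (h : IsRainbowCopyThrough H K κ e) (hK : K ≤ K')
    (hκ : Set.EqOn κ κ' K.edgeSet) : IsRainbowCopyThrough H K' κ' e := by
  obtain ⟨f, hf, hadj, hrainbow, he⟩ := h
  refine ⟨f, hf, fun a b hab => hK (hadj hab), fun a b a' b' hab hab' hcolor => ?_, he⟩
  exact hrainbow hab hab' ((hκ (hadj hab)).trans (hcolor.trans (hκ (hadj hab')).symm))

theorem IsForced.mono (h : IsForced H G c K e) (hK : K ≤ K') : IsForced H G c K' e := fun κ hκ =>
  (h κ (hκ.anti (sup_le_sup_right hK _))).mono (sup_le_sup_right hK _) fun _ _ => rfl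

theorem mem_edgeSet_compl : e ∈ Gᶜ.edgeSet ↔ e ∉ G.edgeSet ∧ ¬ e.IsDiag := by
  induction e with
  | h x y => simp [and_comm]

theorem sup_fromEdgeSet_take_succ (G : SimpleGraph V) (L : List (Sym2 V)) (i : Fin L.length) :
    G ⊔ fromEdgeSet {e | e ∈ L.take (i + 1)} =
      G ⊔ fromEdgeSet {e | e ∈ L.take i} ⊔ fromEdgeSet {L.get i} := by
  rw [sup_assoc, ← fromEdgeSet_union]
  congr 2
  ext e
  simp only [List.take_succ_eq_append_getElem i.2, List.mem_append, List.mem_singleton,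
    List.get_eq_getElem, Set.mem_ofPred_eq, Set.mem_union, Set.mem_singleton_iff]

theorem map_fst_zip_take {α β : Type*} {L : List α} {cs : List β} (hlen : cs.length = L.length)
    (k : ℕ) : ((L.zip cs).take k).map Prod.fst = L.take k := by
  rw [List.map_take, List.map_fst_zip hlen.ge]

theorem map_snd_zip_take {α β : Type*} {L : List α} {cs : List β} (hlen : cs.length = L.length)
    (k : ℕ) : ((L.zip cs).take k).map Prod.snd = cs.take k := by
  rw [List.map_take, List.map_snd_zip hlen.le]

theorem isFreshColoring_recolor [DecidableEq V] {L : List (Sym2 V)} (hnodup : L.Nodup)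
    (hL : ∀ e ∈ L, e ∈ Gᶜ.edgeSet) {cs : List ℕ} (hlen : cs.length = L.length) (hcs : cs.Nodup)
    (k : ℕ) :
    IsFreshColoring G c (G ⊔ fromEdgeSet {e | e ∈ L.take k}) (recolor c ((L.zip cs).take k)) := by
  have hfst := map_fst_zip_take hlen k
  refine ⟨fun e he => recolor_of_notMem ?_, ?_⟩
  · rw [hfst]
    exact fun heL => (mem_edgeSet_compl.1 (hL e (List.mem_of_mem_take heL))).1 he
  · refine (injOn_recolor (hfst ▸ hnodup.take) (map_snd_zip_take hlen k ▸ hcs.take)).mono ?_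
    rw [hfst]
    intro e he
    simp only [edgeSet_sdiff, edgeSet_sup, edgeSet_fromEdgeSet] at he
    exact (he.1.resolve_left he.2).1

theorem IsFreshColoring.exists_eqOn_recolor [DecidableEq V] {L : List (Sym2 V)}
    (hnodup : L.Nodup) (hL : ∀ e ∈ L, e ∈ Gᶜ.edgeSet) {k : ℕ}
    (h : IsFreshColoring G c (G ⊔ fromEdgeSet {e | e ∈ L.take k}) κ) :
    ∃ cs : List ℕ, cs.length = L.length ∧ cs.Nodup ∧
      Set.EqOn (recolor c ((L.zip cs).take k)) κ
        (G ⊔ fromEdgeSet {e | e ∈ L.take k}).edgeSet := by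
  have hinj : Set.InjOn (fun j => κ (L.get j)) {j | j < k} := by
    have hmem (j : Fin L.length) (hj : j < k) : L.get j ∈
        ((G ⊔ fromEdgeSet {e | e ∈ L.take k}) \ G).edgeSet := by
      obtain ⟨hjG, hdiag⟩ := mem_edgeSet_compl.1 (hL _ (L.get_mem j))
      rw [edgeSet_sdiff, edgeSet_sup, edgeSet_fromEdgeSet]
      exact ⟨Or.inr ⟨List.mem_take_iff_getElem.2 ⟨j, by omega, rfl⟩, hdiag⟩, hjG⟩
    exact fun i hi j hj hij => hnodup.injective_get (h.2 (hmem i hi) (hmem j hj) hij)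
  obtain ⟨g, hg, hgκ⟩ := exists_injective_extension hinj
  have hlen : (List.ofFn g).length = L.length := List.length_ofFn
  have hfst := map_fst_zip_take hlen k
  refine ⟨List.ofFn g, hlen, List.nodup_ofFn.2 hg, fun e he => ?_⟩
  by_cases heL : e ∈ L.take k
  · obtain ⟨j, hj, rfl⟩ := List.mem_take_iff_getElem.1 heL
    obtain ⟨hjk, hjL⟩ := lt_min_iff.1 hj
    have hpair : (L[j], g ⟨j, hjL⟩) ∈ (L.zip (List.ofFn g)).take k :=
      List.mem_take_iff_getElem.2 ⟨j, by rw [List.length_zip, hlen]; omega, by simp⟩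
    rw [recolor_of_mem (hfst ▸ hnodup.take) hpair]
    exact hgκ hjk
  · simp only [edgeSet_sup, edgeSet_fromEdgeSet] at he
    rw [recolor_of_notMem (by rwa [hfst]), h.1 (he.resolve_right fun he => heL he.1)]

theorem isForced_iff_forall_recolor [DecidableEq V] {L : List (Sym2 V)} (hnodup : L.Nodup)
    (hL : ∀ e ∈ L, e ∈ Gᶜ.edgeSet) (i : Fin L.length) :
    IsForced H G c (G ⊔ fromEdgeSet {e | e ∈ L.take i}) (L.get i) ↔
      ∀ cs : List ℕ, cs.length = L.length → cs.Nodup →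
        IsRainbowCopyThrough H (G ⊔ fromEdgeSet {e | e ∈ L.take (i + 1)})
          (recolor c ((L.zip cs).take (i + 1))) (L.get i) := by
  rw [IsForced, ← sup_fromEdgeSet_take_succ]
  refine ⟨fun h cs hlen hcs => h _ (isFreshColoring_recolor hnodup hL hlen hcs _), fun h κ hκ => ?_⟩
  obtain ⟨cs, hlen, hcs, heq⟩ := hκ.exists_eqOn_recolor hnodup hL
  exact (h cs hlen hcs).mono le_rfl heq

theorem IsForcingClosed.eq_top_of_weaklyRainbowSat [DecidableEq V]
    (hK : IsForcingClosed H G c K) (hsat : WeaklyRainbowSat H G c) : K = ⊤ := by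
  obtain ⟨L, hnodup, hmem, hcopy⟩ := hsat
  have hL (e) (he : e ∈ L) : e ∉ G.edgeSet ∧ ¬ e.IsDiag := mem_edgeSet_compl.1 ((hmem e).1 he)
  have hget (n : ℕ) (hn : n < L.length) : L[n] ∈ K.edgeSet := by
    induction n using Nat.strong_induction_on with
    | _ n ih =>
      refine hK.mem_of_isForced (hL _ (List.getElem_mem hn)).2 ?_
      have hforced := (isForced_iff_forall_recolor hnodup (fun e he => (hmem e).1 he) ⟨n, hn⟩).2
        fun cs hlen hcs => hcopy cs hlen hcs ⟨n, hn⟩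
      refine hforced.mono (sup_le hK.le ?_)
      rw [← edgeSet_subset_edgeSet, edgeSet_fromEdgeSet]
      rintro e ⟨he, -⟩
      obtain ⟨m, hm, rfl⟩ := List.mem_take_iff_getElem.1 he
      exact ih m (hm.trans_le (min_le_left _ _)) _
  refine top_unique (edgeSet_subset_edgeSet.1 fun e he => ?_)
  by_cases heG : e ∈ G.edgeSet
  · exact edgeSet_subset_edgeSet.2 hK.le heG
  · obtain ⟨n, hn, rfl⟩ := List.getElem_of_mem
      ((hmem e).2 (mem_edgeSet_compl.2 ⟨heG, not_isDiag_of_mem_edgeSet _ he⟩))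
    exact hget n hn

theorem weaklyRainbowSat_iff_forall_isForcingClosed [DecidableEq V] [Finite V] :
    WeaklyRainbowSat H G c ↔ ∀ K, IsForcingClosed H G c K → K = ⊤ := by
  refine ⟨fun h K hK => hK.eq_top_of_weaklyRainbowSat h, fun h => ?_⟩
  obtain ⟨L, hnodup, hL, hmax⟩ := exists_maximal_list_of_rule fun S e =>
    e ∈ Gᶜ.edgeSet ∧ IsForced H G c (G ⊔ fromEdgeSet S) e
  have hmem (e) (he : e ∈ L) : e ∈ Gᶜ.edgeSet := by
    obtain ⟨n, hn, rfl⟩ := List.getElem_of_mem he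
    exact (hL ⟨n, hn⟩).1
  have hclosed : IsForcingClosed H G c (G ⊔ fromEdgeSet {e | e ∈ L}) := by
    refine ⟨le_sup_left, fun e hdiag he => ?_⟩
    by_cases heG : e ∈ G.edgeSet
    · exact edgeSet_subset_edgeSet.2 le_sup_left heG
    · have heL := hmax e ⟨mem_edgeSet_compl.2 ⟨heG, hdiag⟩, he⟩
      rw [edgeSet_sup, edgeSet_fromEdgeSet]
      exact Or.inr ⟨heL, hdiag⟩
  refine ⟨L, hnodup, fun e => ⟨hmem e, fun he => ?_⟩, fun cs hlen hcs i => ?_⟩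
  · obtain ⟨heG, hdiag⟩ := mem_edgeSet_compl.1 he
    have heK : e ∈ (G ⊔ fromEdgeSet {e | e ∈ L}).edgeSet := by
      rw [h _ hclosed, edgeSet_top]
      exact hdiag
    rw [edgeSet_sup, edgeSet_fromEdgeSet] at heK
    exact (heK.resolve_left heG).1
  · exact (isForced_iff_forall_recolor hnodup hmem i).1 (hL i).2 cs hlen hcs

theorem mem_edgeSet_comap {φ : V' → V} {e : Sym2 V'} :
    e ∈ (K.comap φ).edgeSet ↔ e.map φ ∈ K.edgeSet := by
  induction e with
  | h x y => rfl

theorem comap_fromEdgeSet_singleton {φ : V' → V} (hφ : φ.Injective) (e : Sym2 V') :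
    (fromEdgeSet {e.map φ}).comap φ = fromEdgeSet {e} := by
  ext x y
  simp only [comap_adj, fromEdgeSet_adj, Set.mem_singleton_iff, hφ.ne_iff, ← Sym2.map_mk,
    (Sym2.map.injective hφ).eq_iff]

theorem IsRainbowCopyThrough.map {φ : V' → V} (hφ : φ.Injective) {e : Sym2 V'}
    (h : IsRainbowCopyThrough H (K.comap φ) (κ ∘ Sym2.map φ) e) :
    IsRainbowCopyThrough H K κ (e.map φ) := by
  obtain ⟨f, hf, hadj, hrainbow, a, b, hab, rfl⟩ := h
  exact ⟨φ ∘ f, hφ.comp hf, hadj, hrainbow, a, b, hab, rfl⟩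

theorem IsFreshColoring.comap {φ : V' → V} (hφ : φ.Injective) (h : IsFreshColoring G c K κ) :
    IsFreshColoring (G.comap φ) (c ∘ Sym2.map φ) (K.comap φ) (κ ∘ Sym2.map φ) := by
  refine ⟨fun e he => h.1 (mem_edgeSet_comap.1 he), h.2.comp (Sym2.map.injective hφ).injOn ?_⟩
  exact fun e he => mem_edgeSet_comap.1 he

theorem IsForced.map {φ : V' → V} (hφ : φ.Injective) {e : Sym2 V'}
    (h : IsForced H (G.comap φ) (c ∘ Sym2.map φ) (K.comap φ) e) :
    IsForced H G c K (e.map φ) := by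
  intro κ hκ
  have hcomap : K.comap φ ⊔ fromEdgeSet {e} = (K ⊔ fromEdgeSet {e.map φ}).comap φ := by
    rw [← comap_fromEdgeSet_singleton hφ]
    rfl
  refine IsRainbowCopyThrough.map hφ ?_
  rw [← hcomap]
  exact h _ (hcomap ▸ hκ.comap hφ)

theorem IsForcingClosed.comap {φ : V' → V} (hφ : φ.Injective) (hK : IsForcingClosed H G c K) :
    IsForcingClosed H (G.comap φ) (c ∘ Sym2.map φ) (K.comap φ) := by
  refine ⟨fun _ _ h => hK.le h, fun e hdiag he => mem_edgeSet_comap.2 ?_⟩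
  exact hK.mem_of_isForced ((Sym2.isDiag_map hφ).not.2 hdiag) (he.map hφ)

theorem IsForcingClosed.adj_of_weaklyRainbowSat [DecidableEq V'] {G' : SimpleGraph V'}
    (hK : IsForcingClosed H G c K) (φ : G' ↪g G) (hsat : WeaklyRainbowSat H G' (c ∘ Sym2.map φ))
    {x y : V'} (hxy : x ≠ y) : K.Adj (φ x) (φ y) := by
  have hG : G.comap φ = G' := by ext; exact φ.map_adj_iff
  have htop := (hG ▸ hK.comap φ.injective).eq_top_of_weaklyRainbowSat hsat
  rwa [← comap_adj, htop, top_adj]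

theorem WeaklyRainbowSat.comap_equiv [DecidableEq V] [DecidableEq V'] [Finite V']
    (h : WeaklyRainbowSat H G c) (φ : V' ≃ V) :
    WeaklyRainbowSat H (G.comap φ) (c ∘ Sym2.map φ) := by
  refine weaklyRainbowSat_iff_forall_isForcingClosed.2 fun K hK => ?_
  have hG : (G.comap φ).comap φ.symm = G := by ext; simp
  have hc : (c ∘ Sym2.map φ) ∘ Sym2.map φ.symm = c := by ext e; simp [Sym2.map_map]
  have htop := (hG ▸ hc ▸ hK.comap φ.symm.injective).eq_top_of_weaklyRainbowSat h
  ext x y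
  rw [← φ.symm_apply_apply x, ← φ.symm_apply_apply y, ← comap_adj, htop]
  simp

theorem weaklyRainbowSat_top [DecidableEq V] [Finite V] : WeaklyRainbowSat H ⊤ c :=
  weaklyRainbowSat_iff_forall_isForcingClosed.2 fun _ hK => top_unique hK.le

theorem rwsat_le_ncard_edgeSet [DecidableEq V] [Finite V] (h : WeaklyRainbowSat H G c) :
    rwsat H (Nat.card V) ≤ G.edgeSet.ncard := by
  have φ := (Finite.equivFin V).symm
  have hcard : (G.comap φ).edgeSet.ncard = G.edgeSet.ncard :=
    Nat.card_congr (Iso.comap φ G).mapEdgeSet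
  exact Nat.sInf_le (Or.inl ⟨G.comap φ, _, h.comap_equiv φ, hcard⟩)

theorem exists_weaklyRainbowSat_ncard_eq_rwsat (H : SimpleGraph W) (n : ℕ) :
    ∃ (G : SimpleGraph (Fin n)) (c : Sym2 (Fin n) → ℕ),
      WeaklyRainbowSat H G c ∧ G.edgeSet.ncard = rwsat H n := by
  have hmem : rwsat H n ∈ {m | ∃ (G : SimpleGraph (Fin n)) (c : Sym2 (Fin n) → ℕ),
      WeaklyRainbowSat H G c ∧ G.edgeSet.ncard = m} ∪ {n.choose 2} :=
    Nat.sInf_mem ⟨_, Or.inr rfl⟩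
  refine hmem.elim id fun h => ⟨⊤, fun _ => 0, weaklyRainbowSat_top, ?_⟩
  rw [h, ← coe_edgeFinset, Set.ncard_coe_finset, card_edgeFinset_top_eq_card_choose_two,
    Fintype.card_fin]

end Forcing

section Cliques

variable {W V V' : Type*} {H : SimpleGraph W} {G K : SimpleGraph V} {c κ : Sym2 V → ℕ}

theorem isRainbowCopyThrough_of_isClique [Fintype W] {a b : W} (hab : H.Adj a b) {T : Finset V}
    (hW : Fintype.card W ≤ T.card) (hT : K.IsClique T)
    (hκ : Set.InjOn κ (K.edgeSet ∩ (T : Set V).sym2)) {u x : V} (hu : u ∈ T) (hx : x ∈ T)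
    (hux : u ≠ x) : IsRainbowCopyThrough H K κ s(u, x) := by
  classical
  have hendpoints : Set.InjOn (fun w => if w = a then u else x) {a, b} := by
    simp [Set.injOn_pair, hab.ne', hux]
  obtain ⟨f, hf, hfT, hfab⟩ := exists_injective_extension_of_card_le hendpoints
    (fun w _ => by split_ifs <;> assumption) hW
  have hfa : f a = u := by simpa using hfab (Set.mem_insert a {b})
  have hfb : f b = x := by simpa [hab.ne'] using hfab (Set.mem_insert_of_mem a rfl)
  have hadj ⦃v w⦄ (hvw : H.Adj v w) : K.Adj (f v) (f w) := hT (hfT v) (hfT w) (hf.ne hvw.ne)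
  refine ⟨f, hf, hadj, fun v w v' w' hvw hvw' hcolor => Sym2.map.injective hf ?_,
    a, b, hab, by rw [hfa, hfb]⟩
  exact hκ ⟨hadj hvw, Set.mk_mem_sym2_iff.2 ⟨hfT v, hfT w⟩⟩
    ⟨hadj hvw', Set.mk_mem_sym2_iff.2 ⟨hfT v', hfT w'⟩⟩ hcolor

theorem exists_card_le_forall_mem_of_lt {F : Set (Sym2 V)} (hκ : Set.InjOn κ F) (t : ℕ) :
    ∃ B : Finset V, B.card ≤ 2 * t ∧ ∀ e ∈ F, κ e < t → ∀ v ∈ e, v ∈ B := by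
  classical
  have hcolor (i : ℕ) : ∃ B : Finset V, B.card ≤ 2 ∧ ∀ e ∈ F, κ e = i → ∀ v ∈ e, v ∈ B := by
    by_cases h : ∃ e ∈ F, κ e = i
    · obtain ⟨e, he, rfl⟩ := h
      refine ⟨e.toFinset, ?_, fun e' he' hee' v hv => ?_⟩
      · rw [Sym2.card_toFinset]
        split_ifs <;> omega
      · rwa [Sym2.mem_toFinset, ← hκ he' he hee']
    · exact ⟨∅, by simp, fun e he hei => (h ⟨e, he, hei⟩).elim⟩
  choose B hcard hB using hcolor
  refine ⟨(Finset.range t).biUnion B, ?_, fun e he het v hv => ?_⟩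
  · simpa [mul_comm] using Finset.card_biUnion_le_card_mul (Finset.range t) B 2 fun i _ => hcard i
  · exact Finset.mem_biUnion.2 ⟨κ e, Finset.mem_range.2 het, hB _ e he rfl v hv⟩

theorem IsForcingClosed.adj_of_isClique_insert [Fintype W] (hK : IsForcingClosed H G c K)
    (hH : H.edgeSet.Nonempty) {S : Finset V} (hS : Fintype.card W ≤ S.card + 2) {u x : V}
    (hux : u ≠ x) (hu : (K \ G).IsClique (insert u S)) (hx : (K \ G).IsClique (insert x S)) :
    K.Adj u x := by
  classical
  obtain ⟨⟨a, b⟩, hab⟩ := hH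
  by_cases hG : G.Adj u x
  · exact hK.le hG
  by_cases huS : u ∈ S
  · exact (hx (Set.mem_insert_of_mem x huS) (Set.mem_insert x _) hux).1
  by_cases hxS : x ∈ S
  · exact (hu (Set.mem_insert u _) (Set.mem_insert_of_mem u hxS) hux).1
  refine hK.mem_of_isForced (e := s(u, x)) hux fun κ hκ => ?_
  have hle : K \ G ≤ (K ⊔ fromEdgeSet {s(u, x)}) \ G := sdiff_le_sdiff_right le_sup_left
  refine (isRainbowCopyThrough_of_isClique (K := (K ⊔ fromEdgeSet {s(u, x)}) \ G)
    (T := insert u (insert x S)) hab ?_ ?_ (hκ.2.mono Set.inter_subset_left)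
    (by simp) (by simp) hux).mono sdiff_le fun _ _ => rfl
  · rwa [Finset.card_insert_of_notMem (by simp [hux, huS]), Finset.card_insert_of_notMem hxS]
  · rw [Finset.coe_insert, Finset.coe_insert]
    refine (hx.mono hle).insert fun s hs hus => ?_
    rcases hs with rfl | hs
    · exact ⟨Or.inr ⟨rfl, hus⟩, hG⟩
    · exact hle (hu (Set.mem_insert u _) (Set.mem_insert_of_mem u hs) hus)

theorem exists_subset_injOn_of_lt_card {F : Set (Sym2 V)} (hκ : Set.InjOn κ F) {B : Finset V}
    {f : V → ℕ} {t : ℕ} (hB : ∀ i < t, 2 * t < {s ∈ B | f s = i}.card) (j : ℕ) :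
    ∃ S ⊆ B, t ≤ S.card + 1 ∧ Set.InjOn f S ∧ (∀ s ∈ S, f s < t ∧ f s ≠ j) ∧
      ∀ e ∈ F, κ e < t → ∀ v ∈ e, v ∉ S := by
  classical
  obtain ⟨A, hAcard, hA⟩ := exists_card_le_forall_mem_of_lt hκ t
  have hsurj : Set.SurjOn f ↑(B \ A) ↑((Finset.range t).erase j) := by
    intro i hi
    have hit : i < t := by simpa using Finset.mem_of_mem_erase (Finset.mem_coe.1 hi)
    obtain ⟨s, hs, hsA⟩ := Finset.exists_mem_notMem_of_card_lt_card (hAcard.trans_lt (hB i hit))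
    obtain ⟨hsB, hsi⟩ := Finset.mem_filter.1 hs
    exact ⟨s, Finset.mem_coe.2 (Finset.mem_sdiff.2 ⟨hsB, hsA⟩), hsi⟩
  obtain ⟨S, hS, hinj, himage⟩ := Finset.exists_subset_injOn_image_eq_of_surjOn _ _ hsurj
  have hSBA (s) (hs : s ∈ S) : s ∈ B \ A := Finset.mem_coe.1 (hS hs)
  refine ⟨S, fun s hs => (Finset.mem_sdiff.1 (hSBA s hs)).1, ?_, hinj, fun s hs => ?_,
    fun e he het v hv hvS => (Finset.mem_sdiff.1 (hSBA v hvS)).2 (hA e he het v hv)⟩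
  · have hpred := Finset.pred_card_le_card_erase (s := Finset.range t) (a := j)
    rw [← himage, Finset.card_image_of_injOn hinj, Finset.card_range] at hpred
    omega
  · have hfs := Finset.mem_image_of_mem f hs
    rw [himage, Finset.mem_erase, Finset.mem_range] at hfs
    exact hfs.symm

theorem eq_or_exists_eq_or_mem_edgeSet_of_isClique_insert {S : Set V} {u x : V}
    (hS : K.IsClique (insert x S)) {e : Sym2 V} (hdiag : ¬ e.IsDiag)
    (he : e ∈ (insert u (insert x S)).sym2) :
    e = s(u, x) ∨ (∃ s ∈ S, e = s(u, s)) ∨ e ∈ K.edgeSet ∧ ∃ s ∈ S, s ∈ e := by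
  have hstar {q : V} (hq : q ∈ insert x S) : s(u, q) = s(u, x) ∨ ∃ s ∈ S, s(u, q) = s(u, s) :=
    hq.imp (congrArg (s(u, ·))) fun h => ⟨q, h, rfl⟩
  induction e with
  | h p q =>
    have hpq : p ≠ q := hdiag
    rcases Set.mk_mem_sym2_iff.1 he with ⟨rfl | hp, rfl | hq⟩
    · exact (hpq rfl).elim
    · exact (hstar hq).imp_right Or.inl
    · exact Sym2.eq_swap (a := p) ▸ (hstar hp).imp_right Or.inl
    · refine Or.inr (Or.inr ⟨hS hp hq hpq, ?_⟩)
      rcases hp with rfl | hp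
      · exact ⟨q, hq.resolve_left hpq.symm, Sym2.mem_mk_right _ _⟩
      · exact ⟨p, hp, Sym2.mem_mk_left _ _⟩

theorem injOn_union_image_of_lt {α ι : Type*} {f : α → ℕ} {F : Set α} {g : ι → α} {S : Set ι}
    {a : α} {t : ℕ} (hf : F.InjOn f) (hS : S.InjOn fun i => f (g i))
    (hlt : ∀ i ∈ S, f (g i) < t ∧ f (g i) ≠ f a) :
    Set.InjOn f ({b ∈ F | b = a ∨ t ≤ f b} ∪ g '' S) := by
  have hne (b) (hb : b ∈ {b ∈ F | b = a ∨ t ≤ f b}) (i) (hi : i ∈ S) : f b ≠ f (g i) := by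
    rcases hb.2 with rfl | hb
    · exact (hlt i hi).2.symm
    · exact ((hlt i hi).1.trans_le hb).ne'
  have hdisj : Disjoint {b ∈ F | b = a ∨ t ≤ f b} (g '' S) := by
    refine Set.disjoint_left.2 ?_
    rintro _ hb ⟨i, hi, rfl⟩
    exact hne _ hb i hi rfl
  exact (Set.injOn_union hdisj).2 ⟨hf.mono (Set.sep_subset _ _), hS.image_of_comp,
    fun b hb => Set.forall_mem_image.2 (hne b hb)⟩

theorem IsForcingClosed.adj_of_lt_card_color [Fintype W] (hK : IsForcingClosed H G c K)
    (hH : H.edgeSet.Nonempty) {t : ℕ} (hW : Fintype.card W ≤ t) {B : Finset V} {u x : V}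
    (hux : u ≠ x) (hu : ∀ s ∈ B, G.Adj u s) (hx : (K \ G).IsClique (insert x B))
    (hB : ∀ i < t, 2 * t < {s ∈ B | c s(u, s) = i}.card) : K.Adj u x := by
  classical
  obtain ⟨⟨a, b⟩, hab⟩ := hH
  by_cases hG : G.Adj u x
  · exact hK.le hG
  refine hK.mem_of_isForced (e := s(u, x)) hux fun κ hκ => ?_
  have hle : K \ G ≤ (K ⊔ fromEdgeSet {s(u, x)}) \ G := sdiff_le_sdiff_right le_sup_left
  have hcolor (i : ℕ) : {s ∈ B | κ s(u, s) = i} = {s ∈ B | c s(u, s) = i} :=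
    Finset.filter_congr fun s hs => by rw [hκ.1 (G.mem_edgeSet.2 (hu s hs))]
  obtain ⟨S, hSB, hcard, hinj, hlt, hS⟩ := exists_subset_injOn_of_lt_card hκ.2
    (fun i hi => (hcolor i).symm ▸ hB i hi) (κ s(u, x))
  have hxS : (K \ G).IsClique (insert x S) := hx.subset (Set.insert_subset_insert hSB)
  have hux' : s(u, x) ∈ ((K ⊔ fromEdgeSet {s(u, x)}) \ G).edgeSet := ⟨Or.inr ⟨rfl, hux⟩, hG⟩
  refine isRainbowCopyThrough_of_isClique (T := insert u (insert x S)) hab ?_ ?_ ?_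
    (by simp) (by simp) hux
  · rw [Finset.card_insert_of_notMem, Finset.card_insert_of_notMem]
    · omega
    · exact fun h => hG (hu x (hSB h))
    · simp only [Finset.mem_insert, hux, false_or]
      exact fun h => G.irrefl (hu u (hSB h))
  · rw [Finset.coe_insert, Finset.coe_insert]
    refine (hxS.mono (hle.trans sdiff_le)).insert fun s hs hus => ?_
    rcases hs with rfl | hs
    · exact Or.inr ⟨rfl, hus⟩
    · exact Or.inl (hK.le (hu s (hSB hs)))
  · refine (injOn_union_image_of_lt hκ.2 hinj hlt).mono fun e ⟨heK, heT⟩ => ?_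
    rw [Finset.coe_insert, Finset.coe_insert] at heT
    rcases eq_or_exists_eq_or_mem_edgeSet_of_isClique_insert hxS
      (not_isDiag_of_mem_edgeSet _ heK) heT with rfl | ⟨s, hs, rfl⟩ | ⟨he, s, hs, hse⟩
    · exact Or.inl ⟨hux', Or.inl rfl⟩
    · exact Or.inr ⟨s, hs, rfl⟩
    · have heF := edgeSet_subset_edgeSet.2 hle he
      exact Or.inl ⟨heF, Or.inr (not_lt.1 fun h => hS e heF h s hse hs)⟩

theorem IsForcingClosed.isClique_image_of_isIndepSet [DecidableEq V'] {G' : SimpleGraph V'}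
    (hK : IsForcingClosed H G c K) (φ : G' ↪g G) (hsat : WeaklyRainbowSat H G' (c ∘ Sym2.map φ))
    {S : Set V'} (hS : G'.IsIndepSet S) : (K \ G).IsClique (φ '' S) := by
  rintro _ ⟨x, hx, rfl⟩ _ ⟨y, hy, rfl⟩ hxy
  have hne := ne_of_apply_ne φ hxy
  exact ⟨hK.adj_of_weaklyRainbowSat φ hsat hne, φ.map_adj_iff.not.2 (hS hx hy hne)⟩

theorem IsForcingClosed.adj_of_isIndepSet_insert [Fintype W] [DecidableEq V']
    {G' : SimpleGraph V'} (hK : IsForcingClosed H G c K) (hH : H.edgeSet.Nonempty) (φ : G' ↪g G)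
    (hsat : WeaklyRainbowSat H G' (c ∘ Sym2.map φ)) {S : Finset V'}
    (hScard : Fintype.card W ≤ S.card + 2) {u : V} {x : V'} (hux : u ≠ φ x)
    (hx : G'.IsIndepSet (insert x (S : Set V'))) (hu : ∀ s ∈ S, (K \ G).Adj u (φ s)) :
    K.Adj u (φ x) := by
  have hclique := hK.isClique_image_of_isIndepSet φ hsat hx
  rw [Set.image_insert_eq] at hclique
  refine hK.adj_of_isClique_insert hH (S := S.map φ.toEmbedding) (by rwa [Finset.card_map])
    hux ?_ ?_
  · rw [Finset.coe_map]
    refine (hclique.subset (Set.subset_insert _ _)).insert ?_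
    rintro _ ⟨s, hs, rfl⟩ -
    exact hu s hs
  · rwa [Finset.coe_map]

end Cliques

section Independent

variable {V : Type*} [Fintype V] {G : SimpleGraph V} [DecidableRel G.Adj]

theorem card_filter_lt_degree_mul_le (d : ℕ) :
    ({v | d < G.degree v} : Finset V).card * (d + 1) ≤ 2 * G.edgeSet.ncard := by
  rw [← coe_edgeFinset, Set.ncard_coe_finset, ← G.sum_degrees_eq_twice_card_edges, ← smul_eq_mul]
  exact (Finset.card_nsmul_le_sum _ _ _ fun v hv => (Finset.mem_filter.1 hv).2).trans
    (Finset.sum_le_sum_of_subset (Finset.subset_univ _))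

section DecidableEq

variable [DecidableEq V]

/-- The closed neighborhood of `v`: the vertices that an independent set containing `v` has to
avoid, apart from `v` itself. -/
def closedNbhd (G : SimpleGraph V) [DecidableRel G.Adj] (v : V) : Finset V :=
  insert v (G.neighborFinset v)

theorem mem_closedNbhd {v w : V} : w ∈ closedNbhd G v ↔ w = v ∨ G.Adj v w := by
  rw [closedNbhd, Finset.mem_insert, mem_neighborFinset]

theorem card_closedNbhd (v : V) : (closedNbhd G v).card = G.degree v + 1 :=
  Finset.card_insert_of_notMem (G.notMem_neighborFinset_self v)

theorem isIndepSet_insert_of_disjoint_closedNbhd {S : Finset V} {v : V}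
    (hS : G.IsIndepSet (S : Set V)) (hv : Disjoint S (closedNbhd G v)) :
    G.IsIndepSet (insert v (S : Set V)) := by
  rw [← isClique_compl] at hS ⊢
  refine hS.insert fun s hs hvs => ⟨hvs, fun hadj => ?_⟩
  exact Finset.disjoint_left.1 hv hs (mem_closedNbhd.2 (Or.inr hadj))

end DecidableEq

theorem exists_isIndepSet_card_eq {X : Finset V} {d k : ℕ} (hdeg : ∀ v ∉ X, G.degree v ≤ d)
    (hcard : X.card + k * (d + 1) ≤ Fintype.card V) :
    ∃ S : Finset V, S.card = k ∧ Disjoint S X ∧ G.IsIndepSet (S : Set V) := by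
  classical
  induction k generalizing X with
  | zero => exact ⟨∅, by simp⟩
  | succ k ih =>
    rw [Nat.succ_mul] at hcard
    obtain ⟨v, -, hv⟩ := Finset.exists_mem_notMem_of_card_lt_card
      (s := X) (t := Finset.univ) (by rw [Finset.card_univ]; omega)
    have hunion : (X ∪ closedNbhd G v).card ≤ X.card + (d + 1) :=
      (Finset.card_union_le _ _).trans (by grw [card_closedNbhd, hdeg v hv])
    obtain ⟨S, hS, hdisj, hindep⟩ := ih (X := X ∪ closedNbhd G v)
      (fun w hw => hdeg w fun hwX => hw (Finset.mem_union_left _ hwX)) (by omega)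
    obtain ⟨hSX, hSv⟩ := Finset.disjoint_union_right.1 hdisj
    have hvS : v ∉ S := Finset.disjoint_right.1 hSv (mem_closedNbhd.2 (Or.inl rfl))
    refine ⟨insert v S, by rw [Finset.card_insert_of_notMem hvS, hS],
      Finset.disjoint_insert_left.2 ⟨hv, hSX⟩, ?_⟩
    rw [Finset.coe_insert]
    exact isIndepSet_insert_of_disjoint_closedNbhd hindep hSv

end Independent

theorem exists_color_forall_le_card {V : Type*} {B : Finset V} {t k : ℕ} (hB : B.card = t * k) :
    ∃ color : V → ℕ, ∀ i < t, k ≤ {s ∈ B | color s = i}.card := by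
  classical
  let e : B ≃ Fin t × Fin k := (B.equivFinOfCardEq hB).trans finProdFinEquiv.symm
  refine ⟨fun v => if hv : v ∈ B then (e ⟨v, hv⟩).1 else 0, fun i hi => ?_⟩
  have hinj : Function.Injective fun j => (e.symm (⟨i, hi⟩, j) : V) := fun j j' h =>
    (Prod.ext_iff.1 (e.symm.injective (Subtype.ext h))).2
  refine (Finset.card_fin k).symm.trans_le
    (Finset.card_le_card_of_injOn _ (fun j _ => ?_) hinj.injOn)
  simp

section Scaffold

/-- The distinguished vertices of `G` that control which edges are added when `G` is joined to
another graph. Every non-hub has at least `t` pairwise nonadjacent free vertices among its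
non-neighbors, and the anchors are colored so that a vertex joined to all of them sees each of the
colors `0, …, t - 1` more than `2 * t` times. -/
structure Scaffold {V : Type*} (G : SimpleGraph V) (t : ℕ) where
  hubs : Finset V
  anchors : Finset V
  free : Finset V
  color : V → ℕ
  disjoint_hubs_anchors : Disjoint hubs anchors
  disjoint_hubs_free : Disjoint hubs free
  disjoint_anchors_free : Disjoint anchors free
  isIndepSet_insert_anchors : ∀ v ∈ free, G.IsIndepSet (insert v (anchors : Set V))
  lt_card_color : ∀ i < t, 2 * t < {s ∈ anchors | color s = i}.card
  exists_isIndepSet_insert : ∀ v ∉ hubs, ∃ S ⊆ free,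
    t ≤ S.card ∧ G.IsIndepSet (insert v (S : Set V))

variable {V : Type*} {G : SimpleGraph V} {t : ℕ}

/-- The vertices whose joining edges are present from the start. -/
def Scaffold.core (P : Scaffold G t) : Finset V :=
  P.hubs.disjUnion P.anchors P.disjoint_hubs_anchors

theorem Scaffold.mem_core {P : Scaffold G t} {v : V} : v ∈ P.core ↔ v ∈ P.hubs ∨ v ∈ P.anchors :=
  Finset.mem_disjUnion

theorem Scaffold.notMem_core_of_mem_free {P : Scaffold G t} {v : V} (hv : v ∈ P.free) :
    v ∉ P.core := by
  rw [Scaffold.mem_core, not_or]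
  exact ⟨Finset.disjoint_right.1 P.disjoint_hubs_free hv,
    Finset.disjoint_right.1 P.disjoint_anchors_free hv⟩

theorem exists_scaffold [Fintype V] [DecidableRel G.Adj] {U : Finset V} {d : ℕ}
    (hdeg : ∀ v ∉ U, G.degree v ≤ d)
    (hcard : U.card + (t * (2 * t + 1) + t + 1) * (d + 1) ≤ Fintype.card V) :
    ∃ P : Scaffold G t, P.core.card = U.card + t * (2 * t + 1) := by
  classical
  rw [add_mul, add_mul] at hcard
  obtain ⟨B, hBcard, hBU, hB⟩ := exists_isIndepSet_card_eq (k := t * (2 * t + 1)) hdeg (by omega)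
  obtain ⟨color, hcolor⟩ := exists_color_forall_le_card hBcard
  let Z := U ∪ B.biUnion (closedNbhd G)
  have hZ : Z.card ≤ U.card + t * (2 * t + 1) * (d + 1) := by
    refine (Finset.card_union_le _ _).trans (Nat.add_le_add_left ?_ _)
    rw [← hBcard]
    refine Finset.card_biUnion_le_card_mul _ _ _ fun v hv => ?_
    grw [card_closedNbhd, hdeg v (Finset.disjoint_left.1 hBU hv)]
  have hBZ : B ⊆ Z := fun v hv => Finset.mem_union_right _
    (Finset.mem_biUnion.2 ⟨v, hv, mem_closedNbhd.2 (Or.inl rfl)⟩)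
  refine ⟨⟨U, B, Zᶜ, color, hBU.symm, disjoint_compl_right.mono_left Finset.subset_union_left,
    disjoint_compl_right.mono_left hBZ, fun v hv => ?_, hcolor, fun v hv => ?_⟩,
    (Finset.card_disjUnion _ _ _).trans (congrArg _ hBcard)⟩
  · refine isIndepSet_insert_of_disjoint_closedNbhd hB (Finset.disjoint_left.2 fun s hs hsv => ?_)
    have hvs : v ∈ closedNbhd G s := by
      simpa only [mem_closedNbhd, G.adj_comm, eq_comm] using hsv
    exact Finset.mem_compl.1 hv (Finset.mem_union_right _ (Finset.mem_biUnion.2 ⟨s, hs, hvs⟩))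
  · have hunion : (Z ∪ closedNbhd G v).card ≤ Z.card + (d + 1) :=
      (Finset.card_union_le _ _).trans (by grw [card_closedNbhd, hdeg v hv])
    obtain ⟨S, hScard, hdisj, hS⟩ := exists_isIndepSet_card_eq (X := Z ∪ closedNbhd G v) (k := t)
      (fun w hw => hdeg w fun hwU => hw (Finset.mem_union_left _ (Finset.mem_union_left _ hwU)))
      (by omega)
    obtain ⟨hSZ, hSv⟩ := Finset.disjoint_union_right.1 hdisj
    exact ⟨S, hSZ.le_compl_right, hScard.ge, isIndepSet_insert_of_disjoint_closedNbhd hS hSv⟩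

theorem card_filter_div_lt_degree_le [Fintype V] [DecidableRel G.Adj] (ht : 0 < t)
    (hG : G.edgeSet.ncard ≤ t * Fintype.card V) :
    ({v | Fintype.card V / t ^ 4 < G.degree v} : Finset V).card ≤ 2 * t ^ 5 := by
  set d := Fintype.card V / t ^ 4
  have hd : Fintype.card V ≤ (d + 1) * t ^ 4 :=
    (Nat.lt_mul_of_div_lt d.lt_succ_self (Nat.pow_pos ht)).le
  refine Nat.le_of_mul_le_mul_right (c := d + 1) ?_ d.succ_pos
  calc ({v | d < G.degree v} : Finset V).card * (d + 1)
      ≤ 2 * G.edgeSet.ncard := card_filter_lt_degree_mul_le d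
    _ ≤ 2 * (t * ((d + 1) * t ^ 4)) := by grw [hG, hd]
    _ = 2 * t ^ 5 * (d + 1) := by ring

theorem two_mul_pow_five_add_mul_div_le {n : ℕ} (ht : 3 ≤ t) (hn : t ^ 10 ≤ n) :
    2 * t ^ 5 + (t * (2 * t + 1) + t + 1) * (n / t ^ 4 + 1) ≤ n := by
  set d := n / t ^ 4
  have hd : 9 * (t ^ 2 * d) ≤ n := calc
    9 * (t ^ 2 * d) = 3 ^ 2 * (t ^ 2 * d) := by norm_num
    _ ≤ t ^ 2 * (t ^ 2 * d) := by grw [ht]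
    _ = d * t ^ 4 := by ring
    _ ≤ n := Nat.div_mul_le_self _ _
  have hlow : 9 * t ^ 5 ≤ n := calc
    9 * t ^ 5 ≤ 3 ^ 5 * t ^ 5 := by gcongr; norm_num
    _ ≤ t ^ 5 * t ^ 5 := by grw [ht]
    _ = t ^ 10 := by ring
    _ ≤ n := hn
  have hpow : t ^ 2 ≤ t ^ 5 := Nat.pow_le_pow_right (by omega) (by norm_num)
  calc 2 * t ^ 5 + (t * (2 * t + 1) + t + 1) * (d + 1)
      ≤ 2 * t ^ 5 + 3 * t ^ 2 * (d + 1) := by gcongr; nlinarith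
    _ = 2 * t ^ 5 + 3 * (t ^ 2 * d) + 3 * t ^ 2 := by ring
    _ ≤ n := by omega

theorem exists_scaffold_card_core_le [Fintype V] (ht : 3 ≤ t) (hV : t ^ 10 ≤ Fintype.card V)
    (hG : G.edgeSet.ncard ≤ t * Fintype.card V) :
    ∃ P : Scaffold G t, P.core.card ≤ t ^ 7 := by
  classical
  have hU := card_filter_div_lt_degree_le (by omega) hG
  obtain ⟨P, hP⟩ := exists_scaffold (G := G) (t := t)
    (U := {v | Fintype.card V / t ^ 4 < G.degree v}) (d := Fintype.card V / t ^ 4) (by simp)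
    ((Nat.add_le_add_right hU _).trans (two_mul_pow_five_add_mul_div_le ht hV))
  refine ⟨P, hP.trans_le ?_⟩
  calc _ ≤ 2 * t ^ 5 + t * (2 * t + 1) := by grw [hU]
    _ ≤ 2 * t ^ 5 + 3 * t ^ 2 := by nlinarith
    _ ≤ 2 * t ^ 5 + 3 * t ^ 5 := by gcongr <;> omega
    _ ≤ 3 ^ 2 * t ^ 5 := by omega
    _ ≤ t ^ 2 * t ^ 5 := by grw [ht]
    _ = t ^ 7 := by ring

end Scaffold

section ScaffoldForcing

variable {W V V' : Type*} [Fintype W] [DecidableEq V'] {H : SimpleGraph W} {G K : SimpleGraph V}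
  {G' : SimpleGraph V'} {c : Sym2 V → ℕ} {t : ℕ}

theorem Scaffold.le_card_anchors (P : Scaffold G t) : t ≤ P.anchors.card := by
  rcases t.eq_zero_or_pos with rfl | ht
  · exact Nat.zero_le _
  · have hcolor := P.lt_card_color 0 ht
    have hfilter := Finset.card_filter_le P.anchors fun s => P.color s = 0
    omega

theorem Scaffold.adj_of_mem_free (P : Scaffold G' t) (hK : IsForcingClosed H G c K)
    (hH : H.edgeSet.Nonempty) (hW : Fintype.card W ≤ t) (φ : G' ↪g G)
    (hsat : WeaklyRainbowSat H G' (c ∘ Sym2.map φ)) {u : V} {x : V'} (hux : u ≠ φ x)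
    (hx : x ∈ P.free) (hu : ∀ s ∈ P.anchors, G.Adj u (φ s) ∧ c s(u, φ s) = P.color s) :
    K.Adj u (φ x) := by
  have hclique := hK.isClique_image_of_isIndepSet φ hsat (P.isIndepSet_insert_anchors x hx)
  refine hK.adj_of_lt_card_color hH hW (B := P.anchors.map φ.toEmbedding) hux
    (Finset.forall_mem_map.2 fun s hs => (hu s hs).1) ?_ fun i hi => ?_
  · rwa [Finset.coe_map, ← RelEmbedding.coe_toEmbedding, ← Set.image_insert_eq]
  · rw [Finset.filter_map, Finset.card_map]
    convert P.lt_card_color i hi using 1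
    exact congrArg _ (Finset.filter_congr fun s hs => Eq.congr_left (hu s hs).2)

theorem Scaffold.adj_of_notMem_hubs (P : Scaffold G' t) (hK : IsForcingClosed H G c K)
    (hH : H.edgeSet.Nonempty) (hW : Fintype.card W ≤ t) (φ : G' ↪g G)
    (hsat : WeaklyRainbowSat H G' (c ∘ Sym2.map φ)) {u : V} {x : V'} (hux : u ≠ φ x)
    (hx : x ∉ P.hubs) (hu : ∀ s ∈ P.free, (K \ G).Adj u (φ s)) : K.Adj u (φ x) := by
  obtain ⟨S, hS, hcard, hindep⟩ := P.exists_isIndepSet_insert x hx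
  exact hK.adj_of_isIndepSet_insert hH φ hsat (by omega) hux hindep fun s hs => hu s (hS hs)

end ScaffoldForcing

section Join

variable {W V₁ V₂ : Type*} {H : SimpleGraph W} {G₁ : SimpleGraph V₁} {G₂ : SimpleGraph V₂} {t : ℕ}

/-- The coloring of pairs in a disjoint union given by colorings of the pairs inside the two parts
and of the pairs between them. -/
def sumColoring (c₁ : Sym2 V₁ → ℕ) (c₂ : Sym2 V₂ → ℕ) (g : V₁ → V₂ → ℕ) : Sym2 (V₁ ⊕ V₂) → ℕ :=
  Sym2.lift ⟨fun
    | .inl x, .inl x' => c₁ s(x, x')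
    | .inr y, .inr y' => c₂ s(y, y')
    | .inl x, .inr y => g x y
    | .inr y, .inl x => g x y, by
      rintro (x | x) (y | y) <;> simp only [Sym2.eq_swap]⟩

namespace Scaffold

/-- The disjoint union of the two graphs together with all edges between the two cores. -/
def join (P₁ : Scaffold G₁ t) (P₂ : Scaffold G₂ t) : SimpleGraph (V₁ ⊕ V₂) :=
  (G₁ ⊕g G₂) ⊔
    fromEdgeSet ((fun p => s(Sum.inl p.1, Sum.inr p.2)) '' (P₁.core ×ˢ P₂.core : Set (V₁ × V₂)))

/-- The coloring of `join P₁ P₂` extending `c₁` and `c₂` in which an edge to an anchor has the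
color of that anchor. Between two anchors the one in the second graph takes precedence. -/
def joinColoring [DecidableEq V₂] (P₁ : Scaffold G₁ t) (P₂ : Scaffold G₂ t) (c₁ : Sym2 V₁ → ℕ)
    (c₂ : Sym2 V₂ → ℕ) : Sym2 (V₁ ⊕ V₂) → ℕ :=
  sumColoring c₁ c₂ fun x y => if y ∈ P₂.anchors then P₂.color y else P₁.color x

variable {P₁ : Scaffold G₁ t} {P₂ : Scaffold G₂ t}

theorem join_adj_inl_inr {x : V₁} {y : V₂} :
    (P₁.join P₂).Adj (.inl x) (.inr y) ↔ x ∈ P₁.core ∧ y ∈ P₂.core := by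
  simp [join]

/-- The inclusion of the first graph into `join P₁ P₂`. -/
def joinInl (P₁ : Scaffold G₁ t) (P₂ : Scaffold G₂ t) : G₁ ↪g P₁.join P₂ :=
  ⟨.inl, by simp [join]⟩

/-- The inclusion of the second graph into `join P₁ P₂`. -/
def joinInr (P₁ : Scaffold G₁ t) (P₂ : Scaffold G₂ t) : G₂ ↪g P₁.join P₂ :=
  ⟨.inr, by simp [join]⟩

theorem joinColoring_comp_map_joinInl [DecidableEq V₂] {c₁ : Sym2 V₁ → ℕ} {c₂ : Sym2 V₂ → ℕ} :
    P₁.joinColoring P₂ c₁ c₂ ∘ Sym2.map (P₁.joinInl P₂) = c₁ := by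
  ext ⟨x, x'⟩
  rfl

theorem joinColoring_comp_map_joinInr [DecidableEq V₂] {c₁ : Sym2 V₁ → ℕ} {c₂ : Sym2 V₂ → ℕ} :
    P₁.joinColoring P₂ c₁ c₂ ∘ Sym2.map (P₁.joinInr P₂) = c₂ := by
  ext ⟨y, y'⟩
  rfl

theorem ncard_edgeSet_join_le [Finite V₁] [Finite V₂] :
    (P₁.join P₂).edgeSet.ncard ≤
      G₁.edgeSet.ncard + G₂.edgeSet.ncard + P₁.core.card * P₂.core.card := by
  have hsum : (G₁ ⊕g G₂).edgeSet.ncard = G₁.edgeSet.ncard + G₂.edgeSet.ncard :=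
    (Nat.card_congr edgeSetSumEquiv).trans Nat.card_sum
  rw [join, edgeSet_sup, ← hsum, edgeSet_fromEdgeSet]
  refine (Set.ncard_union_le _ _).trans (Nat.add_le_add_left ?_ _)
  calc _ ≤ (P₁.core ×ˢ P₂.core : Set (V₁ × V₂)).ncard :=
        (Set.ncard_le_ncard Set.sdiff_subset).trans (Set.ncard_image_le (Set.toFinite _))
    _ = P₁.core.card * P₂.core.card := by
        rw [← Finset.coe_product, Set.ncard_coe_finset, Finset.card_product]

theorem adj_inl_inr_of_isForcingClosed [Fintype W] [DecidableEq V₁] [DecidableEq V₂]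
    {c₁ : Sym2 V₁ → ℕ} {c₂ : Sym2 V₂ → ℕ} {K : SimpleGraph (V₁ ⊕ V₂)}
    (hK : IsForcingClosed H (P₁.join P₂) (P₁.joinColoring P₂ c₁ c₂) K)
    (hH : H.edgeSet.Nonempty) (hW : Fintype.card W ≤ t) (h₁ : WeaklyRainbowSat H G₁ c₁)
    (h₂ : WeaklyRainbowSat H G₂ c₂) (x : V₁) (y : V₂) : K.Adj (.inl x) (.inr y) := by
  replace h₁ : WeaklyRainbowSat H G₁ (P₁.joinColoring P₂ c₁ c₂ ∘ Sym2.map (P₁.joinInl P₂)) := by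
    rwa [joinColoring_comp_map_joinInl]
  replace h₂ : WeaklyRainbowSat H G₂ (P₁.joinColoring P₂ c₁ c₂ ∘ Sym2.map (P₁.joinInr P₂)) := by
    rwa [joinColoring_comp_map_joinInr]
  have not_adj_free₁ {x y} (hx : x ∈ P₁.free) : ¬ (P₁.join P₂).Adj (.inr y) (.inl x) := fun h =>
    notMem_core_of_mem_free hx (join_adj_inl_inr.1 h.symm).1
  have not_adj_free₂ {x y} (hy : y ∈ P₂.free) : ¬ (P₁.join P₂).Adj (.inl x) (.inr y) := fun h =>
    notMem_core_of_mem_free hy (join_adj_inl_inr.1 h).2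
  have core_free {x y} (hx : x ∈ P₁.core) (hy : y ∈ P₂.free) : K.Adj (.inl x) (.inr y) :=
    P₂.adj_of_mem_free hK hH hW (P₁.joinInr P₂) h₂ Sum.inl_ne_inr hy fun s hs =>
      ⟨join_adj_inl_inr.2 ⟨hx, mem_core.2 (Or.inr hs)⟩, if_pos hs⟩
  have free_free {x y} (hx : x ∈ P₁.free) (hy : y ∈ P₂.free) : K.Adj (.inr y) (.inl x) :=
    hK.adj_of_isIndepSet_insert hH (P₁.joinInl P₂) h₁
      (hW.trans (P₁.le_card_anchors.trans (Nat.le_add_right _ 2))) Sum.inr_ne_inl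
      (P₁.isIndepSet_insert_anchors x hx) fun s hs =>
        ⟨(core_free (mem_core.2 (Or.inr hs)) hy).symm, fun h => not_adj_free₂ hy h.symm⟩
  have all_free (x) {y} (hy : y ∈ P₂.free) : K.Adj (.inl x) (.inr y) := by
    by_cases hx : x ∈ P₁.hubs
    · exact core_free (mem_core.2 (Or.inl hx)) hy
    · exact (P₁.adj_of_notMem_hubs hK hH hW (P₁.joinInl P₂) h₁ Sum.inr_ne_inl hx fun s hs =>
        ⟨free_free hs hy, not_adj_free₁ hs⟩).symm
  have free_hub {x y} (hx : x ∈ P₁.free) (hy : y ∈ P₂.hubs) : K.Adj (.inr y) (.inl x) :=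
    P₁.adj_of_mem_free hK hH hW (P₁.joinInl P₂) h₁ Sum.inr_ne_inl hx fun s hs =>
      ⟨(join_adj_inl_inr.2 ⟨mem_core.2 (Or.inr hs), mem_core.2 (Or.inl hy)⟩).symm,
        if_neg (Finset.disjoint_left.1 P₂.disjoint_hubs_anchors hy)⟩
  by_cases hy : y ∈ P₂.hubs
  · by_cases hx : x ∈ P₁.hubs
    · exact hK.le (join_adj_inl_inr.2 ⟨mem_core.2 (Or.inl hx), mem_core.2 (Or.inl hy)⟩)
    · exact (P₁.adj_of_notMem_hubs hK hH hW (P₁.joinInl P₂) h₁ Sum.inr_ne_inl hx fun s hs =>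
        ⟨free_hub hs hy, not_adj_free₁ hs⟩).symm
  · exact P₂.adj_of_notMem_hubs hK hH hW (P₁.joinInr P₂) h₂ Sum.inl_ne_inr hy fun s hs =>
      ⟨all_free x hs, not_adj_free₂ hs⟩

theorem weaklyRainbowSat_join [Fintype W] [DecidableEq V₁] [DecidableEq V₂] [Finite V₁] [Finite V₂]
    {c₁ : Sym2 V₁ → ℕ} {c₂ : Sym2 V₂ → ℕ} (hH : H.edgeSet.Nonempty) (hW : Fintype.card W ≤ t)
    (h₁ : WeaklyRainbowSat H G₁ c₁) (h₂ : WeaklyRainbowSat H G₂ c₂) :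
    WeaklyRainbowSat H (P₁.join P₂) (P₁.joinColoring P₂ c₁ c₂) := by
  refine weaklyRainbowSat_iff_forall_isForcingClosed.2 fun K hK => ?_
  have hcross := adj_inl_inr_of_isForcingClosed hK hH hW h₁ h₂
  replace h₁ : WeaklyRainbowSat H G₁ (P₁.joinColoring P₂ c₁ c₂ ∘ Sym2.map (P₁.joinInl P₂)) := by
    rwa [joinColoring_comp_map_joinInl]
  replace h₂ : WeaklyRainbowSat H G₂ (P₁.joinColoring P₂ c₁ c₂ ∘ Sym2.map (P₁.joinInr P₂)) := by
    rwa [joinColoring_comp_map_joinInr]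
  rw [← isClique_univ]
  rintro (x | y) - (x' | y') - hne
  · exact hK.adj_of_weaklyRainbowSat (P₁.joinInl P₂) h₁ (ne_of_apply_ne _ hne)
  · exact hcross x y'
  · exact (hcross x' y).symm
  · exact hK.adj_of_weaklyRainbowSat (P₁.joinInr P₂) h₂ (ne_of_apply_ne _ hne)

end Scaffold

end Join

theorem rwsat_subadditive_general {W : Type*} [Fintype W] (H : SimpleGraph W)
    (hH : H.edgeSet.Nonempty) (t : ℕ) (ht : max (Fintype.card W) 3 ≤ t) (m₁ m₂ : ℕ)
    (hm₁ : t ^ 10 ≤ m₁) (hm₂ : t ^ 10 ≤ m₂) (hlin₁ : rwsat H m₁ ≤ t * m₁)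
    (hlin₂ : rwsat H m₂ ≤ t * m₂) :
    rwsat H (m₁ + m₂) ≤ rwsat H m₁ + rwsat H m₂ + t ^ 14 := by
  obtain ⟨hW, ht⟩ := max_le_iff.1 ht
  obtain ⟨G₁, c₁, hsat₁, hG₁⟩ := exists_weaklyRainbowSat_ncard_eq_rwsat H m₁
  obtain ⟨G₂, c₂, hsat₂, hG₂⟩ := exists_weaklyRainbowSat_ncard_eq_rwsat H m₂
  obtain ⟨P₁, hP₁⟩ := exists_scaffold_card_core_le (G := G₁) ht (by simpa) (by simpa [hG₁])
  obtain ⟨P₂, hP₂⟩ := exists_scaffold_card_core_le (G := G₂) ht (by simpa) (by simpa [hG₂])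
  calc rwsat H (m₁ + m₂)
      ≤ (P₁.join P₂).edgeSet.ncard := by
        simpa using rwsat_le_ncard_edgeSet (Scaffold.weaklyRainbowSat_join hH hW hsat₁ hsat₂)
    _ ≤ G₁.edgeSet.ncard + G₂.edgeSet.ncard + P₁.core.card * P₂.core.card :=
        Scaffold.ncard_edgeSet_join_le
    _ ≤ rwsat H m₁ + rwsat H m₂ + t ^ 7 * t ^ 7 := by grw [hG₁, hG₂, hP₁, hP₂]
    _ = rwsat H m₁ + rwsat H m₂ + t ^ 14 := by rw [← pow_add]

/-- Subadditivity of the weak rainbow saturation number: if `H` is non-empty,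
`t ≥ max(|V(H)|, 3)` satisfies `rwsat(n, H) ≤ t·n` for all positive `n`, then for
all `m₁, m₂ ≥ t^10`, `rwsat(m₁ + m₂, H) ≤ rwsat(m₁, H) + rwsat(m₂, H) + t^14`. -/
theorem rwsat_subadditive {W : Type*} [Fintype W] (H : SimpleGraph W)
    (hH : H.edgeSet.Nonempty) (t : ℕ) (ht : max (Fintype.card W) 3 ≤ t)
    (hlin : ∀ n : ℕ, 0 < n → rwsat H n ≤ t * n)
    (m₁ m₂ : ℕ) (hm₁ : t ^ 10 ≤ m₁) (hm₂ : t ^ 10 ≤ m₂) :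
    rwsat H (m₁ + m₂) ≤ rwsat H m₁ + rwsat H m₂ + t ^ 14 := by
  have hpos : 0 < t ^ 10 := Nat.pow_pos (by omega)
  exact rwsat_subadditive_general H hH t ht m₁ m₂ hm₁ hm₂ (hlin m₁ (hpos.trans_le hm₁))
    (hlin m₂ (hpos.trans_le hm₂))
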